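/- arXiv:math/0509215 — 3 statements merged into one kernel-verified Lean document; each statement's English description precedes it below -/
import Mathlib

section
/- Let A : [0,1] → ℝ⁴ be a topological embedding whose image lies in the half-space ℝ³₊ = {x ∈ ℝ⁴ : x₄ = 0, x₃ ≥ 0}, such that A(0) ≠ A(1), the endpoints A(0), A(1) lie in the boundary plane {x₃ = 0, x₄ = 0}, and A(t) has x₃-coordinate strictly positive for all t ∈ (0,1). Then the spun set Spin(A([0,1])) = {R_θ(A(t)) : t ∈ [0,1], θ ∈ ℝ}, equipped with the subspace topology from ℝ⁴, is homeomorphic to the unit 2-sphere {y ∈ ℝ³ : ‖y‖ = 1}. -/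
/-- The spinning rotation `R_θ` on points of `ℝ⁴` (with fourth coordinate zero):
`R_θ(x) = (x₁, x₂, x₃·cos θ, x₃·sin θ)`. -/
noncomputable def spinRot (θ : ℝ) (x : EuclideanSpace ℝ (Fin 4)) : EuclideanSpace ℝ (Fin 4) :=
  (WithLp.equiv 2 (Fin 4 → ℝ)).symm ![x 0, x 1, x 2 * Real.cos θ, x 2 * Real.sin θ]

/-- The half-space `ℝ³₊ = {x ∈ ℝ⁴ : x₄ = 0, x₃ ≥ 0}`. -/
def halfSpace3 : Set (EuclideanSpace ℝ (Fin 4)) := {x | x 3 = 0 ∧ 0 ≤ x 2}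

/-- The boundary plane `{x ∈ ℝ⁴ : x₃ = 0, x₄ = 0}`. -/
def boundaryPlane : Set (EuclideanSpace ℝ (Fin 4)) := {x | x 2 = 0 ∧ x 3 = 0}

/-- The spun set `Spin(X) = {R_θ(x) : x ∈ X, θ ∈ ℝ}`. -/
def SpinSet (X : Set (EuclideanSpace ℝ (Fin 4))) : Set (EuclideanSpace ℝ (Fin 4)) :=
  {y | ∃ x ∈ X, ∃ θ : ℝ, y = spinRot θ x}

/-!
Spinning an arc `γ` in a half-space sends `(t, z) ∈ [0, 1] × S¹` to the point obtained by rotating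
`γ t` by `z`. The fibres of this map do not depend on `γ`: rotation preserves the distance to the
axis, so an injective arc meeting the axis exactly at its endpoints has as its only non-trivial
fibres the two end circles of the cylinder. By compactness, the spins of any two such arcs are the
same quotient of the cylinder, and the spin of a semicircle is the round sphere.
-/

open Real Set unitInterval

section Revolution

variable {E F K : Type*}

/-- The point at the angle `z` on the circle swept out by the point `x` of the half-space
`E × [0, ∞)` as it turns about the axis `E × {0}` in `E × ℂ`. -/
def revolve (x : E × ℝ) (z : Circle) : E × ℂ := (x.1, x.2 * z)

/-- The set of revolution in `E × ℂ` swept out by a profile `S` in `E × ℝ`. -/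
def revolution (S : Set (E × ℝ)) : Set (E × ℂ) := image2 revolve S univ

theorem continuous_revolve [TopologicalSpace E] :
    Continuous fun p : (E × ℝ) × Circle => revolve p.1 p.2 := by
  unfold revolve
  fun_prop

theorem revolve_eq_revolve_iff {x y : E × ℝ} (hx : 0 ≤ x.2) (hy : 0 ≤ y.2) {z w : Circle} :
    revolve x z = revolve y w ↔ x = y ∧ (x.2 = 0 ∨ z = w) := by
  obtain ⟨a, r⟩ := x
  obtain ⟨b, s⟩ := y
  simp only [revolve, Prod.mk.injEq, and_assoc, and_congr_right_iff]
  rintro -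
  constructor
  · intro h
    obtain rfl : r = s := by
      simpa [abs_of_nonneg hx, abs_of_nonneg hy, Circle.norm_coe] using congrArg norm h
    simpa [or_comm, Circle.ext_iff] using h
  · rintro ⟨rfl, rfl | rfl⟩ <;> simp

theorem revolution_range (γ : K → E × ℝ) :
    revolution (range γ) = range fun p : K × Circle => revolve (γ p.1) p.2 := by
  rw [revolution, ← image_univ, image2_image_left, ← image_prod, univ_prod_univ, image_univ]

theorem mem_revolution_iff {S : Set (E × ℝ)} (hS : ∀ x ∈ S, 0 ≤ x.2) {p : E × ℂ} :
    p ∈ revolution S ↔ (p.1, ‖p.2‖) ∈ S := by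
  constructor
  · rintro ⟨x, hx, z, -, rfl⟩
    simpa [revolve, abs_of_nonneg (hS x hx), Circle.norm_coe] using hx
  · intro hp
    exact ⟨_, hp, Circle.exp p.2.arg, trivial, by simp [revolve, Circle.coe_exp]⟩

theorem nonempty_homeomorph_revolution_range [TopologicalSpace E] [T2Space E] [TopologicalSpace F]
    [T2Space F] [TopologicalSpace K] [CompactSpace K] {γ : K → E × ℝ} {δ : K → F × ℝ}
    (hγ : Continuous γ) (hγ_inj : Function.Injective γ) (hγ_nonneg : ∀ t, 0 ≤ (γ t).2)
    (hδ : Continuous δ) (hδ_inj : Function.Injective δ) (hδ_nonneg : ∀ t, 0 ≤ (δ t).2)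
    (haxis : ∀ t, (γ t).2 = 0 ↔ (δ t).2 = 0) :
    Nonempty (revolution (range γ) ≃ₜ revolution (range δ)) := by
  have hγ_spin : Continuous fun p : K × Circle => revolve (γ p.1) p.2 :=
    continuous_revolve.comp (hγ.prodMap continuous_id)
  have hδ_spin : Continuous fun p : K × Circle => revolve (δ p.1) p.2 :=
    continuous_revolve.comp (hδ.prodMap continuous_id)
  have hfibers (p q : K × Circle) : revolve (γ p.1) p.2 = revolve (γ q.1) q.2 ↔
      revolve (δ p.1) p.2 = revolve (δ q.1) q.2 := by
    rw [revolve_eq_revolve_iff (hγ_nonneg _) (hγ_nonneg _), hγ_inj.eq_iff,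
      revolve_eq_revolve_iff (hδ_nonneg _) (hδ_nonneg _), hδ_inj.eq_iff, haxis]
  rw [revolution_range, revolution_range]
  exact ⟨(Homeomorph.quotientKerEquivRange (hγ_spin.isClosedMap.isStrictMap hγ_spin)).symm.trans <|
    (Homeomorph.Quotient.congrRight hfibers).trans <|
      Homeomorph.quotientKerEquivRange (hδ_spin.isClosedMap.isStrictMap hδ_spin)⟩

end Revolution

section ProperArc

variable {E F : Type*} [TopologicalSpace E] [TopologicalSpace F]

/-- A proper arc in the half-space `E × [0, ∞)`: an injective path whose endpoints lie on the
boundary `E × {0}` and whose interior lies above it. -/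
structure IsProperArc (γ : I → E × ℝ) : Prop where
  continuous : Continuous γ
  injective : Function.Injective γ
  snd_zero : (γ 0).2 = 0
  snd_one : (γ 1).2 = 0
  snd_pos : ∀ t, 0 < t → t < 1 → 0 < (γ t).2

namespace IsProperArc

variable {γ : I → E × ℝ} {δ : I → F × ℝ}

theorem snd_eq_zero_iff (hγ : IsProperArc γ) {t : I} : (γ t).2 = 0 ↔ t = 0 ∨ t = 1 := by
  constructor
  · intro ht
    by_contra! hends
    exact (hγ.snd_pos t (unitInterval.pos_iff_ne_zero.2 hends.1)
      (unitInterval.lt_one_iff_ne_one.2 hends.2)).ne' ht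
  · rintro (rfl | rfl)
    exacts [hγ.snd_zero, hγ.snd_one]

theorem snd_nonneg (hγ : IsProperArc γ) (t : I) : 0 ≤ (γ t).2 := by
  by_cases hends : t = 0 ∨ t = 1
  · exact (hγ.snd_eq_zero_iff.2 hends).ge
  · rw [not_or] at hends
    exact (hγ.snd_pos t (unitInterval.pos_iff_ne_zero.2 hends.1)
      (unitInterval.lt_one_iff_ne_one.2 hends.2)).le

theorem nonempty_homeomorph_revolution [T2Space E] [T2Space F] (hγ : IsProperArc γ)
    (hδ : IsProperArc δ) : Nonempty (revolution (range γ) ≃ₜ revolution (range δ)) :=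
  nonempty_homeomorph_revolution_range hγ.continuous hγ.injective hγ.snd_nonneg
    hδ.continuous hδ.injective hδ.snd_nonneg
    fun _ => hγ.snd_eq_zero_iff.trans hδ.snd_eq_zero_iff.symm

end IsProperArc

end ProperArc

section Cylindrical

variable {n : ℕ}

/-- Cylindrical coordinates on `ℝⁿ⁺²`: the last two real coordinates form one complex number. -/
noncomputable def cylindrical (n : ℕ) :
    EuclideanSpace ℝ (Fin n) × ℂ ≃ₜ EuclideanSpace ℝ (Fin (n + 2)) :=
  (((ContinuousLinearEquiv.refl ℝ _).prodCongr
    Complex.orthonormalBasisOneI.repr.toContinuousLinearEquiv).trans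
      EuclideanSpace.finAddEquivProd.symm).toHomeomorph

theorem cylindrical_castAdd (p : EuclideanSpace ℝ (Fin n) × ℂ) (i : Fin n) :
    cylindrical n p (Fin.castAdd 2 i) = p.1 i := by
  simp [cylindrical]

theorem cylindrical_natAdd (p : EuclideanSpace ℝ (Fin n) × ℂ) (i : Fin 2) :
    cylindrical n p (Fin.natAdd n i) = ![p.2.re, p.2.im] i := by
  simp [cylindrical]

theorem norm_sq_cylindrical (p : EuclideanSpace ℝ (Fin n) × ℂ) :
    ‖cylindrical n p‖ ^ 2 = ‖p.1‖ ^ 2 + ‖p.2‖ ^ 2 := by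
  rw [EuclideanSpace.real_norm_sq_eq, Fin.sum_univ_add, EuclideanSpace.real_norm_sq_eq,
    Complex.sq_norm, Complex.normSq_apply]
  simp [cylindrical_castAdd, cylindrical_natAdd, pow_two]

/-- The unit hemisphere in the half-space `E × [0, ∞)`, for the Euclidean rather than the supremum
norm of the product. -/
def hemisphere (E : Type*) [Norm E] : Set (E × ℝ) := {x | ‖x.1‖ ^ 2 + x.2 ^ 2 = 1 ∧ 0 ≤ x.2}

theorem cylindrical_image_revolution_hemisphere (n : ℕ) :
    cylindrical n '' revolution (hemisphere (EuclideanSpace ℝ (Fin n))) = Metric.sphere 0 1 := by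
  ext y
  obtain ⟨p, rfl⟩ := (cylindrical n).surjective y
  rw [(cylindrical n).injective.mem_set_image, mem_revolution_iff fun _ hx => hx.2,
    mem_sphere_zero_iff_norm, ← sq_eq_sq₀ (norm_nonneg _) zero_le_one, norm_sq_cylindrical]
  simp [hemisphere]

end Cylindrical

section Semicircle

/-- The unit semicircle in the half-plane, traversed at constant speed. -/
noncomputable def semicircle (t : I) : EuclideanSpace ℝ (Fin 1) × ℝ :=
  (!₂[cos (π * t)], sin (π * t))

theorem isProperArc_semicircle : IsProperArc semicircle where
  continuous := by
    unfold semicircle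
    fun_prop
  injective s t hst := by
    have hmem (u : I) : π * u ∈ Icc 0 π :=
      ⟨mul_nonneg pi_nonneg u.2.1, mul_le_of_le_one_right pi_nonneg u.2.2⟩
    have hcos : cos (π * s) = cos (π * t) := congrArg (fun x => x.1 0) hst
    exact Subtype.ext <| mul_left_cancel₀ pi_ne_zero <| injOn_cos (hmem s) (hmem t) hcos
  snd_zero := by simp [semicircle]
  snd_one := by simp [semicircle]
  snd_pos _ h0 h1 := sin_pos_of_pos_of_lt_pi (mul_pos pi_pos h0) (mul_lt_of_lt_one_right pi_pos h1)

theorem range_semicircle : range semicircle = hemisphere (EuclideanSpace ℝ (Fin 1)) := by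
  ext ⟨x, r⟩
  constructor
  · rintro ⟨t, ht⟩
    rw [← ht]
    exact ⟨by simp [semicircle, EuclideanSpace.real_norm_sq_eq],
      isProperArc_semicircle.snd_nonneg t⟩
  · rintro ⟨hsq, hr : 0 ≤ r⟩
    replace hsq : x 0 ^ 2 + r ^ 2 = 1 := by simpa [EuclideanSpace.real_norm_sq_eq] using hsq
    obtain ⟨hl, hu⟩ : -1 ≤ x 0 ∧ x 0 ≤ 1 := abs_le.1 <| (sq_le_one_iff_abs_le_one _).1 <| by
      linarith [sq_nonneg r]
    have hcos : cos (arccos (x 0)) = x 0 := cos_arccos hl hu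
    have hsin : sin (arccos (x 0)) = r := by
      rw [sin_arccos, ← hsq, add_sub_cancel_left, sqrt_sq hr]
    refine ⟨⟨arccos (x 0) / π, div_nonneg (arccos_nonneg _) pi_nonneg,
      div_le_one_of_le₀ (arccos_le_pi _) pi_nonneg⟩, Prod.ext ?_ ?_⟩
    · ext i
      simpa [semicircle, mul_div_cancel₀ _ pi_ne_zero, Subsingleton.elim i 0] using hcos
    · simpa [semicircle, mul_div_cancel₀ _ pi_ne_zero] using hsin

end Semicircle

theorem spin_of_arc_homeomorphic_sphere_general {E : Type*} [TopologicalSpace E] [T2Space E]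
    {γ : I → E × ℝ} (hγ : IsProperArc γ) :
    Nonempty (revolution (range γ) ≃ₜ Metric.sphere (0 : EuclideanSpace ℝ (Fin 3)) 1) := by
  obtain ⟨e⟩ := hγ.nonempty_homeomorph_revolution isProperArc_semicircle
  rw [range_semicircle] at e
  rw [← cylindrical_image_revolution_hemisphere 1]
  exact ⟨e.trans ((cylindrical 1).image _)⟩

section SpinSet

/-- The coordinates `((x₁, x₂), x₃)` identifying `halfSpace3` with the half-space `ℝ² × [0, ∞)`; the
coordinate `x₄`, which vanishes there, is forgotten. -/
def halfSpaceCoords (x : EuclideanSpace ℝ (Fin 4)) : EuclideanSpace ℝ (Fin 2) × ℝ :=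
  (!₂[x 0, x 1], x 2)

theorem continuous_halfSpaceCoords : Continuous halfSpaceCoords := by
  unfold halfSpaceCoords
  fun_prop

theorem injOn_halfSpaceCoords : InjOn halfSpaceCoords halfSpace3 := by
  intro x hx y hy hxy
  have hlast : x 3 = y 3 := hx.1.trans hy.1.symm
  ext i
  fin_cases i <;> simp_all [halfSpaceCoords]

theorem spinRot_eq_cylindrical_revolve (θ : ℝ) (x : EuclideanSpace ℝ (Fin 4)) :
    spinRot θ x = cylindrical 2 (revolve (halfSpaceCoords x) (Circle.exp θ)) := by
  ext i
  refine Fin.addCases (m := 2) (n := 2) (fun i => ?_) (fun i => ?_) i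
  · rw [cylindrical_castAdd]
    fin_cases i <;> simp [spinRot, revolve, halfSpaceCoords]
  · rw [cylindrical_natAdd]
    fin_cases i <;> simp [spinRot, revolve, halfSpaceCoords, Circle.coe_exp,
      Complex.exp_ofReal_mul_I_re, Complex.exp_ofReal_mul_I_im]

theorem spinSet_eq_cylindrical_image_revolution (X : Set (EuclideanSpace ℝ (Fin 4))) :
    SpinSet X = cylindrical 2 '' revolution (halfSpaceCoords '' X) := by
  ext y
  constructor
  · rintro ⟨x, hx, θ, rfl⟩
    exact ⟨_, ⟨_, ⟨x, hx, rfl⟩, Circle.exp θ, trivial, rfl⟩,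
      (spinRot_eq_cylindrical_revolve θ x).symm⟩
  · rintro ⟨_, ⟨_, ⟨x, hx, rfl⟩, z, -, rfl⟩, rfl⟩
    exact ⟨x, hx, (z : ℂ).arg, by rw [spinRot_eq_cylindrical_revolve, Circle.exp_arg]⟩

end SpinSet

/-- The spin of an embedded arc in the half-space, with endpoints on the boundary plane and
interior strictly above it, is homeomorphic to the 2-sphere. -/
theorem spin_of_arc_homeomorphic_sphere
    (A : Set.Icc (0 : ℝ) 1 → EuclideanSpace ℝ (Fin 4))
    (hemb : Topology.IsEmbedding A)
    (hhalf : ∀ t, A t ∈ halfSpace3)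
    (hne : A ⟨0, by norm_num⟩ ≠ A ⟨1, by norm_num⟩)
    (h0 : A ⟨0, by norm_num⟩ ∈ boundaryPlane)
    (h1 : A ⟨1, by norm_num⟩ ∈ boundaryPlane)
    (hint : ∀ t : Set.Icc (0 : ℝ) 1, 0 < (t : ℝ) → (t : ℝ) < 1 → 0 < A t 2) :
    Nonempty (↥(SpinSet (Set.range A)) ≃ₜ ↥(Metric.sphere (0 : EuclideanSpace ℝ (Fin 3)) 1)) := by
  have harc : IsProperArc (halfSpaceCoords ∘ A) :=
    { continuous := continuous_halfSpaceCoords.comp hemb.continuous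
      injective := fun s t hst =>
        hemb.injective (injOn_halfSpaceCoords (hhalf s) (hhalf t) hst)
      snd_zero := h0.1
      snd_one := h1.1
      snd_pos := hint }
  rw [spinSet_eq_cylindrical_image_revolution, ← range_comp]
  exact (spin_of_arc_homeomorphic_sphere_general harc).map
    ((cylindrical 2).image _).symm.trans
end

section
/- Let ρ > 0. In the Euclidean plane ℝ², the circle of radius (√3/2)·ρ centered at the origin is contained in the union of the six closed disks of radius ρ/√2 centered at the points (ρ·cos(kπ/3), ρ·sin(kπ/3)) for k = 0, 1, …, 5. -/
/-!
Let a point of the circle of radius `r` have polar angle `θ`. The vertices of a regular `n`-gon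
centered at the origin have angles spaced by `2π/n`, so one of them is within `π/n` of `θ`. By the
law of cosines its distance from the point is at most `√(r² + ρ² - 2rρ cos (π/n))`, where `ρ` is
the circumradius. For the hexagon and `r = (√3/2)ρ` this is `ρ/2`, less than the radius `ρ/√2`.
-/

/-- The point of the Euclidean plane with polar coordinates `(r, θ)`, for an arbitrary real
radius `r`. It describes both the points of a circle and the vertices of a regular polygon. -/
noncomputable def polarPoint (r θ : ℝ) : EuclideanSpace ℝ (Fin 2) :=
  !₂[r * Real.cos θ, r * Real.sin θ]

theorem exists_polarPoint_norm_eq (p : EuclideanSpace ℝ (Fin 2)) :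
    ∃ θ : ℝ, polarPoint ‖p‖ θ = p := by
  obtain ⟨z, rfl⟩ := Complex.orthonormalBasisOneI.repr.surjective p
  refine ⟨z.arg, ?_⟩
  rw [LinearIsometryEquiv.norm_map]
  ext i
  fin_cases i
  exacts [Complex.norm_mul_cos_arg z, Complex.norm_mul_sin_arg z]

theorem dist_polarPoint_sq (r θ s φ : ℝ) :
    dist (polarPoint r θ) (polarPoint s φ) ^ 2 =
      r ^ 2 + s ^ 2 - 2 * r * s * Real.cos (θ - φ) := by
  rw [EuclideanSpace.dist_sq_eq, Fin.sum_univ_two, Real.cos_sub]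
  simp only [polarPoint, Real.dist_eq, sq_abs, PiLp.toLp_apply, Matrix.cons_val_zero,
    Matrix.cons_val_one]
  linear_combination r ^ 2 * Real.cos_sq_add_sin_sq θ + s ^ 2 * Real.cos_sq_add_sin_sq φ

theorem exists_fin_cos_sub_eq (n : ℕ) [NeZero n] (θ : ℝ) (m : ℤ) :
    ∃ k : Fin n, Real.cos (θ - k * (2 * Real.pi / n)) = Real.cos (θ - m * (2 * Real.pi / n)) := by
  have hn : (n : ℝ) ≠ 0 := NeZero.ne _
  have hnZ : (n : ℤ) ≠ 0 := NeZero.ne _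
  obtain ⟨k, hk⟩ := Int.eq_ofNat_of_zero_le (Int.emod_nonneg m hnZ)
  have hkn : k < n := by
    exact_mod_cast hk ▸ Int.emod_lt_of_pos m (by positivity)
  have hm : (m : ℝ) = k + n * (m / n : ℤ) := by
    exact_mod_cast hk ▸ (Int.emod_add_mul_ediv m n).symm
  refine ⟨⟨k, hkn⟩, ?_⟩
  rw [← Real.cos_sub_int_mul_two_pi _ (m / n), hm]
  congr 1
  field_simp
  ring

theorem exists_fin_cos_pi_div_le (n : ℕ) [NeZero n] (θ : ℝ) :
    ∃ k : Fin n, Real.cos (Real.pi / n) ≤ Real.cos (θ - k * (2 * Real.pi / n)) := by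
  have hn : (1 : ℝ) ≤ n := by exact_mod_cast NeZero.one_le
  have hδ : 0 < 2 * Real.pi / n := by positivity
  set δ := 2 * Real.pi / n with hδ_def
  have hround : |θ - round (δ⁻¹ * θ) * δ| ≤ Real.pi / n := by
    calc |θ - round (δ⁻¹ * θ) * δ| = ‖(θ : AddCircle δ)‖ := (AddCircle.norm_eq δ).symm
      _ ≤ |δ| / 2 := AddCircle.norm_le_half_period δ hδ.ne'
      _ = Real.pi / n := by rw [abs_of_pos hδ, hδ_def]; ring
  obtain ⟨k, hk⟩ := exists_fin_cos_sub_eq n θ (round (δ⁻¹ * θ))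
  refine ⟨k, ?_⟩
  rw [hk, ← Real.cos_abs (θ - _)]
  exact Real.cos_le_cos_of_nonneg_of_le_pi (abs_nonneg _) (div_le_self Real.pi_pos.le hn)
    hround

theorem sphere_subset_iUnion_closedBall_polarPoint (n : ℕ) [NeZero n] (r : ℝ) {ρ : ℝ}
    (hρ : 0 ≤ ρ) :
    Metric.sphere (0 : EuclideanSpace ℝ (Fin 2)) r ⊆
      ⋃ k : Fin n, Metric.closedBall (polarPoint ρ (k * (2 * Real.pi / n)))
        √(r ^ 2 + ρ ^ 2 - 2 * r * ρ * Real.cos (Real.pi / n)) := by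
  intro p hp
  obtain rfl : ‖p‖ = r := mem_sphere_zero_iff_norm.1 hp
  obtain ⟨θ, hθ⟩ := exists_polarPoint_norm_eq p
  obtain ⟨k, hk⟩ := exists_fin_cos_pi_div_le n θ
  refine Set.mem_iUnion.2 ⟨k, Metric.mem_closedBall.2 (Real.le_sqrt_of_sq_le ?_)⟩
  calc dist p (polarPoint ρ (k * (2 * Real.pi / n))) ^ 2
      = ‖p‖ ^ 2 + ρ ^ 2 - 2 * ‖p‖ * ρ * Real.cos (θ - k * (2 * Real.pi / n)) := by
        rw [← dist_polarPoint_sq, hθ]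
    _ ≤ ‖p‖ ^ 2 + ρ ^ 2 - 2 * ‖p‖ * ρ * Real.cos (Real.pi / n) := by gcongr

theorem circle_subset_union_six_disks_general {ρ : ℝ} (hρ : 0 ≤ ρ) :
    Metric.sphere (0 : EuclideanSpace ℝ (Fin 2)) (√3 / 2 * ρ) ⊆
      ⋃ k : Fin 6, Metric.closedBall (polarPoint ρ (k * Real.pi / 3)) (ρ / 2) := by
  have hradicand : (√3 / 2 * ρ) ^ 2 + ρ ^ 2 -
      2 * (√3 / 2 * ρ) * ρ * Real.cos (Real.pi / (6 : ℕ)) = (ρ / 2) ^ 2 := by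
    rw [Nat.cast_ofNat, Real.cos_pi_div_six]
    linear_combination -(ρ ^ 2 / 4) * Real.sq_sqrt (show (0 : ℝ) ≤ 3 by norm_num)
  have hangle (k : ℝ) : k * (2 * Real.pi / (6 : ℕ)) = k * Real.pi / 3 := by
    push_cast
    ring
  simpa only [hradicand, Real.sqrt_sq (div_nonneg hρ zero_le_two), hangle] using
    sphere_subset_iUnion_closedBall_polarPoint 6 (√3 / 2 * ρ) hρ

/-- The circle of radius `(√3/2)·ρ` centered at the origin of the Euclidean plane is contained
in the union of the six closed disks of radius `ρ/√2` centered at the vertices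
`(ρ·cos(kπ/3), ρ·sin(kπ/3))`, `k = 0, …, 5`, of a regular hexagon. -/
theorem circle_subset_union_six_disks (ρ : ℝ) (hρ : 0 < ρ) :
    Metric.sphere (0 : EuclideanSpace ℝ (Fin 2)) (Real.sqrt 3 / 2 * ρ) ⊆
      ⋃ k : Fin 6,
        Metric.closedBall
          ((WithLp.equiv 2 (Fin 2 → ℝ)).symm
            ![ρ * Real.cos (k * Real.pi / 3), ρ * Real.sin (k * Real.pi / 3)])
          (ρ / Real.sqrt 2) := by
  have hradius : ρ / 2 ≤ ρ / √2 := by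
    gcongr
    exact Real.sqrt_le_self_iff.2 (.inr one_le_two)
  exact (circle_subset_union_six_disks_general hρ.le).trans
    (Set.iUnion_mono fun _ ↦ Metric.closedBall_subset_closedBall hradius)
end

section
/- Let A : [0,1] → ℝ⁴ be a topological embedding with image in the half-space ℝ³₊ = {x ∈ ℝ⁴ : x₄ = 0, x₃ ≥ 0}, with A(0) ≠ A(1) lying in the boundary plane {x₃ = 0, x₄ = 0} and with (A(t))₃ > 0 for t ∈ (0,1). Then for suitable basepoints the fundamental group of ℝ⁴ ∖ Spin(A([0,1])) is isomorphic to the fundamental group of ℝ³₊ ∖ A([0,1]). -/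
/-!
Let `K ⊆ ℝ³₊` be closed and let `q : ℝ × (ℝ³₊ ∖ K) → ℝ⁴ ∖ Spin(K)` send `(θ, m)` to `R_θ m`. The map
induced on fundamental groups by the inclusion `m ↦ q (0, m)` is injective because the inclusion has
a continuous left inverse, which spins each point back into the half-space.

For surjectivity, `q` lifts path classes starting at a basepoint `p` of the boundary plane, although
it is not a fibration. Away from the boundary plane a path has a continuous polar angle. Near a
point of the plane a path is homotopic to the image of a straight segment, inside a ball that
spinning preserves. Such local lifts can be composed: two points of the same fibre, in the path
component of `p`, are joined by a path whose image is null-homotopic, namely move to `p`, where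
changing the angle has no effect, change it there, and come back. Hence every loop at `p` is the
image of a path class from `(0, p)` to itself, and as `ℝ` is simply connected, of a loop in
`ℝ³₊ ∖ K`.
-/

open Set Topology unitInterval Path

section Lifting

variable {E X Y : Type*} [TopologicalSpace E] [TopologicalSpace X] [TopologicalSpace Y]

theorem pathClass_induction_of_local {x : X}
    {motive : ∀ y, Homotopic.Quotient x y → Prop} (refl : motive x (.refl x))
    (trans : ∀ z, ∃ U ∈ 𝓝 z, ∀ {a b} (g : Homotopic.Quotient x a) (δ : Path a b),
      range δ ⊆ U → motive a g → motive b (g.trans (.mk δ)))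
    {y : X} (g : Homotopic.Quotient x y) : motive y g := by
  induction g using Homotopic.Quotient.ind with | mk γ
  choose U hU htrans using trans
  obtain ⟨t, ht0, hmono, ⟨n, hn⟩, ht⟩ := exists_monotone_Icc_subset_open_cover_unitInterval
    (fun z => isOpen_interior.preimage γ.continuous)
    (fun s _ => mem_iUnion.2 ⟨γ s, mem_interior_iff_mem_nhds.2 (hU _)⟩)
  have transport {w w' : X} (hw : w' = w) {g : Homotopic.Quotient x w} (hg : motive w g) :
      motive w' (g.cast rfl hw) := by
    subst hw
    simpa using hg
  have initial k : motive _ (.mk ((γ.subpath 0 (t k)).cast γ.source.symm rfl)) := by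
    induction k with
    | zero =>
      rw [ht0, Path.subpath_self]
      convert transport γ.source refl
      exact congrArg Homotopic.Quotient.mk (Path.ext (funext fun _ => γ.source))
    | succ k ih =>
      obtain ⟨z, hz⟩ := ht k
      have hrange : range (γ.subpath (t k) (t (k + 1))) ⊆ U z := by
        rw [Path.range_subpath_of_le _ _ _ (hmono k.le_succ)]
        exact image_subset_iff.2 fun s hs => interior_subset (s := U z) (hz hs)
      convert htrans z _ _ hrange ih using 1
      exact Homotopic.Quotient.eq.2 ((Homotopic.symm
        ⟨Path.Homotopy.subpathTransSubpath γ 0 (t k) (t (k + 1))⟩).pathCast γ.source.symm rfl)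
  have final := initial n
  rw [hn n le_rfl, Path.subpath_zero_one] at final
  exact transport γ.target.symm final

theorem injective_pathClass_map_of_leftInverse {f : C(X, Y)} {r : C(Y, X)}
    (h : Function.LeftInverse r f) (x y : X) :
    Function.Injective fun g : Homotopic.Quotient x y => g.map f := by
  have map_map (g : Homotopic.Quotient x y) : (g.map f).map r = g.cast (h x) (h y) := by
    induction g using Homotopic.Quotient.ind with | mk γ
    exact congrArg Homotopic.Quotient.mk (Path.ext (funext fun t => h (γ t)))
  intro g g' hg
  have hcast : g.cast (h x) (h y) = g'.cast (h x) (h y) := by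
    rw [← map_map, ← map_map]
    exact congrArg (Homotopic.Quotient.map · r) hg
  simpa using congrArg (Homotopic.Quotient.cast · (h x).symm (h y).symm) hcast

/-- The path class `g` is the image under `q` of a path class in `E` from `z` to `z'`. The endpoints
of `g` need only be propositionally equal to `q z` and `q z'`, so that lifts can be composed. -/
def HasLift (q : C(E, X)) (z z' : E) {a b : X} (g : Homotopic.Quotient a b) : Prop :=
  ∃ (ha : a = q z) (hb : b = q z') (Γ : Homotopic.Quotient z z'), (Γ.map q).cast ha hb = g

variable {q : C(E, X)} {z z' z'' : E} {a b c : X}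

theorem HasLift.joined {g : Homotopic.Quotient a b} (h : HasLift q z z' g) : Joined z z' := by
  obtain ⟨-, -, Γ, -⟩ := h
  exact ⟨Γ.out⟩

theorem HasLift.trans {g : Homotopic.Quotient a b} {g' : Homotopic.Quotient b c}
    (h : HasLift q z z' g) (h' : HasLift q z' z'' g') : HasLift q z z'' (g.trans g') := by
  obtain ⟨rfl, rfl, Γ, rfl⟩ := h
  obtain ⟨-, rfl, Γ', rfl⟩ := h'
  refine ⟨rfl, rfl, Γ.trans Γ', ?_⟩
  induction Γ, Γ' using Homotopic.Quotient.ind₂ with | mk Γ Γ'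
  simp [← Homotopic.Quotient.mk_trans, ← Homotopic.Quotient.mk_map]

theorem HasLift.mk (Γ : Path z z') {γ : Path a b} (h : ∀ t, q (Γ t) = γ t) :
    HasLift q z z' (.mk γ) := by
  refine ⟨by simpa using (h 0).symm, by simpa using (h 1).symm, .mk Γ, ?_⟩
  exact congrArg Homotopic.Quotient.mk (Path.ext (funext h))

theorem hasLift_of_local {z₀ : E}
    (hfib : ∀ {z z'}, Joined z₀ z → q z = q z' → HasLift q z z' (.refl (q z)))
    (hloc : ∀ x, ∃ U ∈ 𝓝 x, ∀ {a b} (γ : Path a b), range γ ⊆ U →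
      ∃ z z', HasLift q z z' (.mk γ))
    (hz : q z = b) (g : Homotopic.Quotient (q z₀) b) : HasLift q z₀ z g := by
  induction g using pathClass_induction_of_local generalizing z with
  | refl => exact hfib (.refl z₀) hz.symm
  | trans x =>
    obtain ⟨U, hU, hlift⟩ := hloc x
    refine ⟨U, hU, fun {a b} g γ hγ ih z hz => ?_⟩
    obtain ⟨w, w', hw⟩ := hlift γ hγ
    have hgγ := (ih hw.choose.symm).trans hw
    obtain ⟨-, rfl, -⟩ := id hw
    simpa using hgγ.trans (hfib hgγ.joined hz.symm)

end Lifting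

theorem homotopic_of_forall_mem_convex {E : Type*} [AddCommGroup E] [Module ℝ E]
    [TopologicalSpace E] [IsTopologicalAddGroup E] [ContinuousSMul ℝ E] {s B : Set E}
    (hB : Convex ℝ B) (hBs : B ⊆ s) {a b : s} {γ δ : Path a b}
    (hγ : ∀ t, (γ t : E) ∈ B) (hδ : ∀ t, (δ t : E) ∈ B) : γ.Homotopic δ := by
  let F := ContinuousMap.Homotopy.affine
    ((ContinuousMap.mk Subtype.val).comp γ.toContinuousMap)
    ((ContinuousMap.mk Subtype.val).comp δ.toContinuousMap)
  exact ⟨{ toFun x := ⟨F x, hBs (hB.lineMap_mem (hγ _) (hδ _) x.1.2)⟩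
           map_zero_left t := by simp
           map_one_left t := by simp
           prop' t x hx := by obtain rfl | rfl := hx <;> simp [F] }⟩

theorem exists_continuous_polar_angle {f : C(I, ℂ)} (hf : ∀ t, f t ≠ 0) :
    ∃ α : C(I, ℝ), ∀ t, (‖f t‖ : ℂ) * Circle.exp (α t) = f t := by
  have hnorm t : (‖f t‖ : ℂ) ≠ 0 := by simpa using hf t
  let u : C(I, Circle) :=
    ⟨fun t => ⟨f t / ‖f t‖, mem_sphere_zero_iff_norm.2 (by simp [hf t])⟩,
      by fun_prop (disch := assumption)⟩
  obtain ⟨θ, hθ⟩ := Circle.exp_surjective (u 0)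
  obtain ⟨α, hα, -⟩ := Circle.isCoveringMap_exp.exists_path_lifts u θ hθ.symm
  refine ⟨α, fun t => ?_⟩
  rw [show Circle.exp (α t) = u t from congrFun hα t]
  exact mul_div_cancel₀ _ (hnorm t)

section Spinning

local notation "ℝ⁴" => EuclideanSpace ℝ (Fin 4)

theorem continuous_spinRot : Continuous fun p : ℝ × ℝ⁴ => spinRot p.1 p.2 := by
  refine (PiLp.continuous_toLp 2 _).comp (continuous_pi fun i => ?_)
  fin_cases i <;> dsimp <;> fun_prop

theorem spinRot_zero {x : ℝ⁴} (hx : x 3 = 0) : spinRot 0 x = x := by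
  ext i
  fin_cases i <;> simp [spinRot, hx]

theorem spinRot_of_mem_boundaryPlane {x : ℝ⁴} (hx : x ∈ boundaryPlane) (θ : ℝ) :
    spinRot θ x = x := by
  ext i
  fin_cases i <;> simp [spinRot, hx.1, hx.2]

theorem dist_spinRot_of_mem_boundaryPlane {x c : ℝ⁴} (hx : x 3 = 0) (hc : c ∈ boundaryPlane)
    (θ : ℝ) : dist (spinRot θ x) c = dist x c := by
  have hsq : (x 2 * Real.cos θ) ^ 2 + (x 2 * Real.sin θ) ^ 2 = x 2 ^ 2 := by
    linear_combination x 2 ^ 2 * Real.cos_sq_add_sin_sq θ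
  simp [EuclideanSpace.dist_eq, Fin.sum_univ_four, Real.dist_eq, hc.1, hc.2, hx, spinRot, add_assoc,
    hsq]

theorem convex_halfSpace3 : Convex ℝ halfSpace3 := by
  rintro x ⟨hx3, hx2⟩ y ⟨hy3, hy2⟩ a b ha hb -
  constructor
  · simp [hx3, hy3]
  · exact add_nonneg (mul_nonneg ha hx2) (mul_nonneg hb hy2)

/-- The coordinate `x₃ + i x₄` of `ℝ⁴` normal to the boundary plane, in which spinning by `θ` is
multiplication by `e^{iθ}`. -/
noncomputable def normalCoord (x : ℝ⁴) : ℂ := x 2 + x 3 * Complex.I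

theorem continuous_normalCoord : Continuous normalCoord := by
  unfold normalCoord
  fun_prop

theorem normalCoord_eq_zero_iff {x : ℝ⁴} : normalCoord x = 0 ↔ x ∈ boundaryPlane := by
  simp [normalCoord, boundaryPlane, Complex.ext_iff]

theorem normalCoord_spinRot (θ : ℝ) (x : ℝ⁴) :
    normalCoord (spinRot θ x) = (x 2 : ℂ) * Circle.exp θ := by
  rw [Circle.coe_exp, Complex.exp_mul_I]
  simp [normalCoord, spinRot, mul_add, mul_assoc]

theorem ext_normalCoord {x y : ℝ⁴} (h0 : x 0 = y 0) (h1 : x 1 = y 1)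
    (h : normalCoord x = normalCoord y) : x = y := by
  obtain ⟨h2, h3⟩ : x 2 = y 2 ∧ x 3 = y 3 := by simpa [normalCoord, Complex.ext_iff] using h
  ext i
  fin_cases i
  exacts [h0, h1, h2, h3]

theorem spinRot_congr {θ θ' : ℝ} (h : Circle.exp θ = Circle.exp θ') (x : ℝ⁴) :
    spinRot θ x = spinRot θ' x :=
  ext_normalCoord rfl rfl (by simp [normalCoord_spinRot, h])

/-- The point of the half-space lying on the circle that spinning sweeps out through `x`. -/
noncomputable def spinProj (x : ℝ⁴) : ℝ⁴ := !₂[x 0, x 1, ‖normalCoord x‖, 0]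

theorem continuous_spinProj : Continuous spinProj := by
  refine (PiLp.continuous_toLp 2 _).comp (continuous_pi fun i => ?_)
  have := continuous_normalCoord
  fin_cases i <;> dsimp <;> fun_prop

theorem spinProj_mem_halfSpace3 (x : ℝ⁴) : spinProj x ∈ halfSpace3 := by
  simp [spinProj, halfSpace3]

theorem spinProj_spinRot {x : ℝ⁴} (hx : x ∈ halfSpace3) (θ : ℝ) :
    spinProj (spinRot θ x) = x := by
  ext i
  fin_cases i
  · rfl
  · rfl
  · simp [spinProj, normalCoord_spinRot, abs_of_nonneg hx.2]
  · simp [spinProj, hx.1]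

theorem spinRot_spinProj {θ : ℝ} {x : ℝ⁴}
    (h : (‖normalCoord x‖ : ℂ) * Circle.exp θ = normalCoord x) : spinRot θ (spinProj x) = x :=
  ext_normalCoord rfl rfl (by rw [normalCoord_spinRot, ← h]; simp [spinProj])

theorem exists_spinRot_spinProj (x : ℝ⁴) : ∃ θ, spinRot θ (spinProj x) = x :=
  ⟨(normalCoord x).arg, spinRot_spinProj (by simp)⟩

theorem spinSet_eq_preimage {K : Set ℝ⁴} (hK : K ⊆ halfSpace3) : SpinSet K = spinProj ⁻¹' K := by
  ext x
  constructor
  · rintro ⟨z, hz, θ, rfl⟩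
    rwa [mem_preimage, spinProj_spinRot (hK hz)]
  · intro hx
    obtain ⟨θ, hθ⟩ := exists_spinRot_spinProj x
    exact ⟨_, hx, θ, hθ.symm⟩

theorem subset_spinSet {K : Set ℝ⁴} (hK : K ⊆ halfSpace3) : K ⊆ SpinSet K := fun x hx =>
  ⟨x, hx, 0, (spinRot_zero (hK hx).1).symm⟩

theorem isOpen_compl_spinSet {K : Set ℝ⁴} (hK : K ⊆ halfSpace3) (hcl : IsClosed K) :
    IsOpen (SpinSet K)ᶜ :=
  spinSet_eq_preimage hK ▸ (hcl.preimage continuous_spinProj).isOpen_compl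

variable {K : Set ℝ⁴} (hK : K ⊆ halfSpace3)

/-- The surjection `(θ, m) ↦ R_θ m` from `ℝ × (ℝ³₊ ∖ K)` to `ℝ⁴ ∖ Spin(K)`, along which path classes
are lifted. -/
noncomputable def spinMap : C(ℝ × ↥(halfSpace3 \ K), ↥(SpinSet K)ᶜ) where
  toFun z := ⟨spinRot z.1 z.2, by
    rw [spinSet_eq_preimage hK, mem_compl_iff, mem_preimage, spinProj_spinRot z.2.2.1]
    exact z.2.2.2⟩
  continuous_toFun := by
    refine (continuous_spinRot.comp (?_ : Continuous fun z : ℝ × ↥(halfSpace3 \ K) =>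
      (z.1, (z.2 : ℝ⁴)))).subtype_mk _
    fun_prop

/-- The restriction of `spinProj` to `ℝ⁴ ∖ Spin(K)`, a retraction onto `ℝ³₊ ∖ K`. -/
noncomputable def spinRetraction : C(↥(SpinSet K)ᶜ, ↥(halfSpace3 \ K)) where
  toFun y := ⟨spinProj y, spinProj_mem_halfSpace3 _, by
    simpa [spinSet_eq_preimage hK] using y.2⟩
  continuous_toFun := (continuous_spinProj.comp continuous_subtype_val).subtype_mk _

/-- The inclusion of `ℝ³₊ ∖ K` into `ℝ⁴ ∖ Spin(K)`, encoded as the slice `θ = 0` of `spinMap`. -/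
noncomputable def spinIncl : C(↥(halfSpace3 \ K), ↥(SpinSet K)ᶜ) :=
  (spinMap hK).comp (.prodMk (.const _ 0) (.id _))

theorem spinRetraction_spinMap (z : ℝ × ↥(halfSpace3 \ K)) :
    spinRetraction hK (spinMap hK z) = z.2 :=
  Subtype.ext (spinProj_spinRot z.2.2.1 z.1)

theorem spinMap_of_mem_boundaryPlane {m : ↥(halfSpace3 \ K)} (hm : (m : ℝ⁴) ∈ boundaryPlane)
    (θ θ' : ℝ) : spinMap hK (θ, m) = spinMap hK (θ', m) :=
  Subtype.ext <| by simp [spinMap, spinRot_of_mem_boundaryPlane hm]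

theorem spinMap_eq_iff {θ θ' : ℝ} {m m' : ↥(halfSpace3 \ K)} :
    spinMap hK (θ, m) = spinMap hK (θ', m') ↔
      m = m' ∧ ((m : ℝ⁴) ∈ boundaryPlane ∨ Circle.exp θ = Circle.exp θ') := by
  constructor
  · intro h
    obtain rfl : m = m' := by simpa [spinRetraction_spinMap] using congrArg (spinRetraction hK) h
    have hn : ((m : ℝ⁴) 2 : ℂ) * Circle.exp θ = (m : ℝ⁴) 2 * Circle.exp θ' := by
      simpa [spinMap, normalCoord_spinRot] using congrArg (fun y : ↥(SpinSet K)ᶜ => normalCoord y) h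
    refine ⟨rfl, (mul_eq_mul_left_iff.1 hn).symm.imp (fun h0 => ?_) (Circle.ext ·)⟩
    exact ⟨by simpa using h0, m.2.1.1⟩
  · rintro ⟨rfl, hm | hθ⟩
    exacts [spinMap_of_mem_boundaryPlane hK hm θ θ', Subtype.ext (spinRot_congr hθ m)]

theorem hasLift_refl_of_mem_boundaryPlane {m : ↥(halfSpace3 \ K)}
    (hm : (m : ℝ⁴) ∈ boundaryPlane) (θ θ' : ℝ) :
    HasLift (spinMap hK) (θ, m) (θ', m) (.refl (spinMap hK (θ, m))) :=
  .mk ((Path.segment θ θ').prod (.refl m)) fun _ => spinMap_of_mem_boundaryPlane hK hm _ _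

theorem hasLift_refl_of_joined {m p : ↥(halfSpace3 \ K)} (hp : (p : ℝ⁴) ∈ boundaryPlane)
    (hmp : Joined m p) {θ θ' : ℝ} (h : Circle.exp θ = Circle.exp θ') :
    HasLift (spinMap hK) (θ, m) (θ', m) (.refl (spinMap hK (θ, m))) := by
  obtain ⟨ω⟩ := hmp
  let γ : Path (spinMap hK (θ, m)) (spinMap hK (θ, p)) :=
    ((Path.refl θ).prod ω).map (spinMap hK).continuous
  have outward : HasLift (spinMap hK) (θ, m) (θ, p) (.mk γ) :=
    .mk ((Path.refl θ).prod ω) fun _ => rfl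
  have back : HasLift (spinMap hK) (θ', p) (θ', m) (.mk γ.symm) :=
    .mk ((Path.refl θ').prod ω.symm) fun t => Subtype.ext (spinRot_congr h.symm _)
  simpa using (outward.trans (hasLift_refl_of_mem_boundaryPlane hK hp θ θ')).trans back

theorem hasLift_refl_of_spinMap_eq {z z' : ℝ × ↥(halfSpace3 \ K)} {p : ↥(halfSpace3 \ K)}
    (hp : (p : ℝ⁴) ∈ boundaryPlane) (hz : Joined z.2 p) (h : spinMap hK z = spinMap hK z') :
    HasLift (spinMap hK) z z' (.refl (spinMap hK z)) := by
  obtain ⟨θ, m⟩ := z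
  obtain ⟨θ', m'⟩ := z'
  obtain ⟨rfl, hm | hθ⟩ := (spinMap_eq_iff hK).1 h
  exacts [hasLift_refl_of_mem_boundaryPlane hK hm θ θ', hasLift_refl_of_joined hK hp hz hθ]

theorem exists_hasLift_of_forall_notMem_boundaryPlane {a b : ↥(SpinSet K)ᶜ} (γ : Path a b)
    (hγ : ∀ t, (γ t : ℝ⁴) ∉ boundaryPlane) : ∃ z z', HasLift (spinMap hK) z z' (.mk γ) := by
  obtain ⟨α, hα⟩ := exists_continuous_polar_angle
    (f := ⟨fun t => normalCoord (γ t), continuous_normalCoord.comp (by fun_prop)⟩)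
    fun t => normalCoord_eq_zero_iff.not.2 (hγ t)
  let αpath : Path (α 0) (α 1) := ⟨α, rfl, rfl⟩
  exact ⟨_, _, .mk (αpath.prod (γ.map (spinRetraction hK).continuous))
    fun t => Subtype.ext (spinRot_spinProj (hα t))⟩

theorem spinMap_mem_ball_iff {c : ℝ⁴} (hc : c ∈ boundaryPlane) {ε : ℝ}
    (z : ℝ × ↥(halfSpace3 \ K)) :
    (spinMap hK z : ℝ⁴) ∈ Metric.ball c ε ↔ (z.2 : ℝ⁴) ∈ Metric.ball c ε := by
  rw [Metric.mem_ball, Metric.mem_ball]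
  exact (dist_spinRot_of_mem_boundaryPlane z.2.2.1.1 hc z.1).symm ▸ Iff.rfl

theorem spinMap_surjective : Function.Surjective (spinMap hK) := fun y =>
  let ⟨θ, hθ⟩ := exists_spinRot_spinProj (y : ℝ⁴)
  ⟨(θ, spinRetraction hK y), Subtype.ext hθ⟩

theorem exists_hasLift_of_forall_mem_ball {c : ℝ⁴} (hc : c ∈ boundaryPlane) {ε : ℝ}
    (hball : Metric.ball c ε ⊆ (SpinSet K)ᶜ) {a b : ↥(SpinSet K)ᶜ} (γ : Path a b)
    (hγ : ∀ t, (γ t : ℝ⁴) ∈ Metric.ball c ε) : ∃ z z', HasLift (spinMap hK) z z' (.mk γ) := by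
  obtain ⟨⟨θ, m⟩, rfl⟩ := spinMap_surjective hK a
  obtain ⟨⟨θ', m'⟩, rfl⟩ := spinMap_surjective hK b
  have hm : (m : ℝ⁴) ∈ Metric.ball c ε :=
    (spinMap_mem_ball_iff hK hc (θ, m)).1 (by simpa using hγ 0)
  have hm' : (m' : ℝ⁴) ∈ Metric.ball c ε :=
    (spinMap_mem_ball_iff hK hc (θ', m')).1 (by simpa using hγ 1)
  have hsegment (t : I) : Path.segment (m : ℝ⁴) m' t ∈ Metric.ball c ε :=
    (convex_ball c ε).lineMap_mem hm hm' t.2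
  let ω : Path m m' :=
    { toFun t := ⟨Path.segment (m : ℝ⁴) m' t, convex_halfSpace3.lineMap_mem m.2.1 m'.2.1 t.2,
        fun h => hball (hsegment t) (subset_spinSet hK h)⟩
      continuous_toFun := by fun_prop
      source' := Subtype.ext (Path.source _)
      target' := Subtype.ext (Path.target _) }
  let Γ : Path (θ, m) (θ', m') := (Path.segment θ θ').prod ω
  have hΓ : (Γ.map (spinMap hK).continuous).Homotopic γ :=
    homotopic_of_forall_mem_convex (convex_ball c ε) hball
      (fun t => (spinMap_mem_ball_iff hK hc (Γ t)).2 (hsegment t)) hγ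
  refine ⟨(θ, m), (θ', m'), ?_⟩
  rw [← Homotopic.Quotient.eq.2 hΓ]
  exact HasLift.mk Γ fun _ => rfl

theorem exists_nhds_hasLift (hcl : IsClosed K) (y : ↥(SpinSet K)ᶜ) :
    ∃ U ∈ 𝓝 y, ∀ {a b} (γ : Path a b), range γ ⊆ U →
      ∃ z z', HasLift (spinMap hK) z z' (.mk γ) := by
  by_cases hy : (y : ℝ⁴) ∈ boundaryPlane
  · obtain ⟨ε, hε, hball⟩ := Metric.isOpen_iff.1 (isOpen_compl_spinSet hK hcl) y y.2
    exact ⟨Metric.ball y ε, Metric.ball_mem_nhds y hε, fun γ hγ =>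
      exists_hasLift_of_forall_mem_ball hK hy hball γ fun t => hγ (mem_range_self t)⟩
  · have hopen : IsOpen {x : ↥(SpinSet K)ᶜ | normalCoord x ≠ 0} :=
      isOpen_ne.preimage (continuous_normalCoord.comp continuous_subtype_val)
    refine ⟨_, hopen.mem_nhds (normalCoord_eq_zero_iff.not.2 hy), fun γ hγ => ?_⟩
    exact exists_hasLift_of_forall_notMem_boundaryPlane hK γ fun t =>
      normalCoord_eq_zero_iff.not.1 (hγ (mem_range_self t))

theorem injective_map_spinIncl (p : ↥(halfSpace3 \ K)) :
    Function.Injective (FundamentalGroup.map (spinIncl hK) p) :=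
  injective_pathClass_map_of_leftInverse (r := spinRetraction hK)
    (fun m => spinRetraction_spinMap hK (0, m)) p p

theorem surjective_map_spinIncl (hcl : IsClosed K) {p : ↥(halfSpace3 \ K)}
    (hp : (p : ℝ⁴) ∈ boundaryPlane) :
    Function.Surjective (FundamentalGroup.map (spinIncl hK) p) := by
  intro g
  obtain ⟨-, -, Γ, rfl⟩ : HasLift (spinMap hK) (0, p) (0, p) g :=
    hasLift_of_local (fun h => hasLift_refl_of_spinMap_eq hK hp (h.symm.map continuous_snd))
      (exists_nhds_hasLift hK hcl) rfl g
  induction Γ using Homotopic.Quotient.ind with | mk Γ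
  let α := Γ.map continuous_fst
  let ω := Γ.map continuous_snd
  obtain ⟨F⟩ : (Path.refl 0).Homotopic α := SimplyConnectedSpace.paths_homotopic _ _
  have hΓ : ((Path.refl 0).prod ω).Homotopic Γ := ⟨Path.Homotopic.prodHomotopy F (.refl ω)⟩
  exact ⟨.mk ω, Homotopic.Quotient.eq.2 (hΓ.map (spinMap hK))⟩

theorem not_boundaryPlane_subset_of_isBounded (hb : Bornology.IsBounded K) :
    ¬boundaryPlane ⊆ K := by
  obtain ⟨R, hR⟩ := hb.exists_norm_le
  intro h
  have hle : ‖EuclideanSpace.single (0 : Fin 4) (|R| + 1)‖ ≤ R :=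
    hR _ (h (by simp [boundaryPlane]))
  rw [PiLp.norm_single, Real.norm_of_nonneg (by positivity)] at hle
  linarith [le_abs_self R]

end Spinning

theorem fundamentalGroup_complement_spin_iso_general {K : Set (EuclideanSpace ℝ (Fin 4))}
    (hK : K ⊆ halfSpace3) (hcl : IsClosed K) (hplane : ¬boundaryPlane ⊆ K) :
    ∃ (x : ↥(SpinSet K)ᶜ) (y : ↥(halfSpace3 \ K)),
      Nonempty (FundamentalGroup ↥(SpinSet K)ᶜ x ≃* FundamentalGroup ↥(halfSpace3 \ K) y) := by
  obtain ⟨p, hp, hpK⟩ := not_subset.1 hplane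
  let y : ↥(halfSpace3 \ K) := ⟨p, ⟨hp.2, hp.1.ge⟩, hpK⟩
  exact ⟨spinIncl hK y, y, ⟨(MulEquiv.ofBijective (FundamentalGroup.map (spinIncl hK) y)
    ⟨injective_map_spinIncl hK y, surjective_map_spinIncl hK hcl hp⟩).symm⟩⟩

/-- For an embedded arc `A` in the half-space `ℝ³₊` with endpoints on the boundary plane and
interior strictly above it, the fundamental group of `ℝ⁴ ∖ Spin(A)` is isomorphic (for suitable
basepoints) to the fundamental group of `ℝ³₊ ∖ A`. -/
theorem fundamentalGroup_complement_spin_iso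
    (A : Set.Icc (0 : ℝ) 1 → EuclideanSpace ℝ (Fin 4))
    (hemb : Topology.IsEmbedding A)
    (hhalf : ∀ t, A t ∈ halfSpace3)
    (hne : A ⟨0, by norm_num⟩ ≠ A ⟨1, by norm_num⟩)
    (h0 : A ⟨0, by norm_num⟩ ∈ boundaryPlane)
    (h1 : A ⟨1, by norm_num⟩ ∈ boundaryPlane)
    (hint : ∀ t : Set.Icc (0 : ℝ) 1, 0 < (t : ℝ) → (t : ℝ) < 1 → 0 < A t 2) :
    ∃ (x : ↥((SpinSet (Set.range A))ᶜ)) (y : ↥(halfSpace3 \ Set.range A)),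
      Nonempty (FundamentalGroup ↥((SpinSet (Set.range A))ᶜ) x ≃*
        FundamentalGroup ↥(halfSpace3 \ Set.range A) y) := by
  have hcompact := isCompact_range hemb.continuous
  exact fundamentalGroup_complement_spin_iso_general (range_subset_iff.2 hhalf) hcompact.isClosed
    (not_boundaryPlane_subset_of_isBounded hcompact.isBounded)
end
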